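/- arXiv:1712.00145 — 3 statements merged into one kernel-verified Lean document; each statement's English description precedes it below -/
import Mathlib

section
/- For all N_S ≥ 0 and σ ≥ 0, the 4×4 matrix V_Φ(N_S) + V_τ(N_S, σ) has determinant equal to 16(σ(2N_S + 1) + 1)², and consequently 4/√(det(V_Φ(N_S) + V_τ(N_S, σ))) = 1/(σ + 2σN_S + 1). (By the Gaussian-state overlap formula, this value is the entanglement fidelity ⟨Φ(N_S)| τ(N_S,σ) |Φ(N_S)⟩ of the two-mode squeezed vacuum after one mode passes through an additive-noise channel of variance σ.) -/
/-- Wigner covariance matrix of the two-mode squeezed vacuum with mean photon number `N`. -/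
noncomputable def VPhi (N : ℝ) : Matrix (Fin 4) (Fin 4) ℝ :=
  !![2*N+1, 2*Real.sqrt (N*(N+1)), 0, 0;
     2*Real.sqrt (N*(N+1)), 2*N+1, 0, 0;
     0, 0, 2*N+1, -(2*Real.sqrt (N*(N+1)));
     0, 0, -(2*Real.sqrt (N*(N+1))), 2*N+1]

/-- Wigner covariance matrix of the two-mode squeezed vacuum with mean photon number `N`
after one mode passes through an additive-noise channel of variance `σ`. -/
noncomputable def VTau (N σ : ℝ) : Matrix (Fin 4) (Fin 4) ℝ :=
  !![2*N+1, 2*Real.sqrt (N*(N+1)), 0, 0;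
     2*Real.sqrt (N*(N+1)), 2*N+1+2*σ, 0, 0;
     0, 0, 2*N+1, -(2*Real.sqrt (N*(N+1)));
     0, 0, -(2*Real.sqrt (N*(N+1))), 2*N+1+2*σ]

/-!
Both covariance matrices are in the standard form of a two-mode Gaussian state, with local
quadrature variances `a`, `b` and correlations `±c`, and so is their sum. The position and
momentum blocks each have determinant `ab - c²`; for the sum this equals
`4(σ(2N+1) + 1)`, because `(2N+1)² - 4N(N+1) = 1` expresses purity of the squeezed vacuum.
-/

/-- The standard form of the covariance matrix of a two-mode Gaussian state whose position and
momentum correlations are opposite, in the quadrature ordering `(q₁, q₂, p₁, p₂)`: the modes have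
quadrature variances `a` and `b`, the correlations are `c` in position and `-c` in momentum. -/
def twoModeStandardForm {R : Type*} [CommRing R] (a b c : R) : Matrix (Fin 4) (Fin 4) R :=
  !![a, c, 0, 0;
     c, b, 0, 0;
     0, 0, a, -c;
     0, 0, -c, b]

section StandardForm

variable {R : Type*} [CommRing R]

theorem twoModeStandardForm_add (a b c a' b' c' : R) :
    twoModeStandardForm a b c + twoModeStandardForm a' b' c' =
      twoModeStandardForm (a + a') (b + b') (c + c') := by
  ext i j
  fin_cases i <;> fin_cases j <;> simp [twoModeStandardForm, add_comm]

theorem twoModeStandardForm_eq_reindex_fromBlocks (a b c : R) :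
    twoModeStandardForm a b c =
      Matrix.reindex finSumFinEquiv finSumFinEquiv
        (Matrix.fromBlocks !![a, c; c, b] 0 0 !![a, -c; -c, b]) := by
  ext i j
  fin_cases i <;> fin_cases j <;> rfl

theorem det_twoModeStandardForm (a b c : R) :
    (twoModeStandardForm a b c).det = (a * b - c ^ 2) ^ 2 := by
  rw [twoModeStandardForm_eq_reindex_fromBlocks, Matrix.det_reindex_self,
    Matrix.det_fromBlocks_zero₂₁, Matrix.det_fin_two_of, Matrix.det_fin_two_of]
  ring

end StandardForm

theorem VPhi_eq_twoModeStandardForm (N : ℝ) :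
    VPhi N = twoModeStandardForm (2 * N + 1) (2 * N + 1) (2 * √(N * (N + 1))) :=
  rfl

theorem VTau_eq_twoModeStandardForm (N σ : ℝ) :
    VTau N σ = twoModeStandardForm (2 * N + 1) (2 * N + 1 + 2 * σ) (2 * √(N * (N + 1))) :=
  rfl

theorem det_VPhi_add_VTau {N : ℝ} (hN : 0 ≤ N * (N + 1)) (σ : ℝ) :
    (VPhi N + VTau N σ).det = (4 * (σ * (2 * N + 1) + 1)) ^ 2 := by
  have hsqrt : √(N * (N + 1)) ^ 2 = N * (N + 1) := Real.sq_sqrt hN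
  rw [VPhi_eq_twoModeStandardForm, VTau_eq_twoModeStandardForm, twoModeStandardForm_add,
    det_twoModeStandardForm]
  congr 1
  linear_combination -16 * hsqrt

theorem tmsv_additive_noise_overlap_general {N σ : ℝ} (hN : 0 ≤ N * (N + 1))
    (hσ : 0 < σ * (2 * N + 1) + 1) :
    (VPhi N + VTau N σ).det = 16 * (σ * (2 * N + 1) + 1) ^ 2 ∧
      4 / √(VPhi N + VTau N σ).det = 1 / (σ + 2 * σ * N + 1) := by
  rw [det_VPhi_add_VTau hN]
  refine ⟨by ring, ?_⟩
  calc
    4 / √((4 * (σ * (2 * N + 1) + 1)) ^ 2) = 4 / (4 * (σ * (2 * N + 1) + 1)) := by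
      rw [Real.sqrt_sq (by positivity)]
    _ = 1 / (σ * (2 * N + 1) + 1) := by rw [div_mul_cancel_left₀ four_ne_zero, one_div]
    _ = 1 / (σ + 2 * σ * N + 1) := by ring_nf

/-- `det(V_Φ(N_S) + V_τ(N_S, σ)) = 16(σ(2N_S + 1) + 1)²`, and consequently the
Gaussian overlap `4/√(det(V_Φ(N_S) + V_τ(N_S,σ))) = 1/(σ + 2σN_S + 1)`. -/
theorem tmsv_additive_noise_overlap (N σ : ℝ) (hN : 0 ≤ N) (hσ : 0 ≤ σ) :
    (VPhi N + VTau N σ).det = 16 * (σ * (2*N + 1) + 1) ^ 2 ∧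
    4 / Real.sqrt ((VPhi N + VTau N σ).det) = 1 / (σ + 2*σ*N + 1) := by
  exact tmsv_additive_noise_overlap_general (by positivity) (by positivity)
end

section
/- For all N₁, N₂ ≥ 0, the series ∑_{n=0}^∞ √(p_n(N₁) p_n(N₂)) converges and equals 1/(√((N₁+1)(N₂+1)) − √(N₁N₂)), where p_n(N) = Nⁿ/(N+1)^{n+1}. (Since thermal states are commuting diagonal density operators with these eigenvalues, the square of this quantity is the fidelity F(θ(N₁), θ(N₂)) of two bosonic thermal states of mean photon numbers N₁ and N₂.) -/
/-! By multiplicativity of the square root, the `n`-th term is `bⁿ / aⁿ⁺¹` with `b = √(N₁ N₂)` and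
`a = √((N₁ + 1) (N₂ + 1))`, so the series is geometric with ratio `b / a < 1`. -/

theorem hasSum_pow_div_pow_succ {K : Type*} [NormedField K] {a b : K} (h : ‖b‖ < ‖a‖) :
    HasSum (fun n : ℕ => b ^ n / a ^ (n + 1)) (1 / (a - b)) := by
  have ha : a ≠ 0 := norm_pos_iff.mp ((norm_nonneg b).trans_lt h)
  have hratio : ‖b / a‖ < 1 := by
    rwa [norm_div, div_lt_one (norm_pos_iff.mpr ha)]
  have hterm (n : ℕ) : b ^ n / a ^ (n + 1) = (b / a) ^ n / a := by
    rw [div_pow, div_div, pow_succ]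
  have hvalue : 1 / (a - b) = (1 - b / a)⁻¹ / a := by
    rw [one_sub_div ha, inv_div, div_div_cancel_left' ha, one_div]
  simpa only [hterm, hvalue] using (hasSum_geometric_of_norm_lt_one hratio).div_const a

theorem sqrt_pow_of_nonneg {x : ℝ} (hx : 0 ≤ x) (n : ℕ) : √(x ^ n) = √x ^ n := by
  rw [Real.sqrt_eq_iff_eq_sq (pow_nonneg hx n) (pow_nonneg (Real.sqrt_nonneg x) n),
    pow_right_comm, Real.sq_sqrt hx]

theorem thermal_state_fidelity_series_general {x y c d : ℝ} (hxy : 0 ≤ x * y)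
    (hlt : x * y < c * d) :
    HasSum (fun n : ℕ => √((x ^ n / c ^ (n + 1)) * (y ^ n / d ^ (n + 1))))
      (1 / (√(c * d) - √(x * y))) := by
  have hterm (n : ℕ) : √((x ^ n / c ^ (n + 1)) * (y ^ n / d ^ (n + 1))) =
      √(x * y) ^ n / √(c * d) ^ (n + 1) := by
    rw [div_mul_div_comm, ← mul_pow, ← mul_pow, Real.sqrt_div (pow_nonneg hxy n),
      sqrt_pow_of_nonneg hxy, sqrt_pow_of_nonneg (hxy.trans hlt.le)]
  have hnorm : ‖√(x * y)‖ < ‖√(c * d)‖ := by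
    simpa only [Real.norm_of_nonneg (Real.sqrt_nonneg _)] using Real.sqrt_lt_sqrt hxy hlt
  simpa only [hterm] using hasSum_pow_div_pow_succ hnorm

/-- For `N₁, N₂ ≥ 0`, the series `∑ₙ √(pₙ(N₁) pₙ(N₂))` with
`pₙ(N) = Nⁿ/(N+1)^{n+1}` (geometric photon-number distribution of a thermal state)
converges to `1/(√((N₁+1)(N₂+1)) − √(N₁N₂))`; its square is the fidelity of the two
thermal states. -/
theorem thermal_state_fidelity_series (N₁ N₂ : ℝ) (h₁ : 0 ≤ N₁) (h₂ : 0 ≤ N₂) :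
    HasSum
      (fun n : ℕ => Real.sqrt ((N₁ ^ n / (N₁ + 1) ^ (n + 1)) * (N₂ ^ n / (N₂ + 1) ^ (n + 1))))
      (1 / (Real.sqrt ((N₁ + 1) * (N₂ + 1)) - Real.sqrt (N₁ * N₂))) :=
  thermal_state_fidelity_series_general (mul_nonneg h₁ h₂)
    (mul_lt_mul'' (lt_add_one N₁) (lt_add_one N₂) h₁ h₂)
end

section
/- For every transmissivity η ∈ (0,1) and thermal photon number N_B ≥ 0, the quantity e(N_B, η, σ) tends to 0 as σ → 0⁺. (Since e(N_B, η, σ) is a uniform upper bound, holding for all input states, on the sine distance between the thermal channel L_{η,N_B} and its teleportation simulation L_{η,N_B + ησ/(1−η)}, this establishes that the teleportation simulation of the thermal channel converges uniformly to the thermal channel in the limit of ideal squeezing and detection.) -/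
open Filter Topology

/-- The uniform bound `e(N_B, η, σ)` on the sine distance between the thermal channel
`L_{η,N_B}` and its teleportation simulation `L_{η,N_B'}`, where
`N_B' = N_B + ησ/(1−η)`: the sine distance between the thermal environment states
`θ(N_B)` and `θ(N_B')`. -/
noncomputable def eTherm (NB η σ : ℝ) : ℝ :=
  Real.sqrt (1 -
    (Real.sqrt ((NB + 1) * ((NB + η * σ / (1 - η)) + 1)) -
      Real.sqrt (NB * (NB + η * σ / (1 - η)))) ^ (-2 : ℤ))

/-- The thermal photon number `N_B' = N_B + ησ/(1−η)` of the channel simulated by teleportation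
with noise variance `σ`. -/
noncomputable def simulatedPhotonNumber (NB η σ : ℝ) : ℝ :=
  NB + η * σ / (1 - η)

/-- The fidelity `F(θ(N), θ(M))` of the thermal states with mean photon numbers `N` and `M`.
It is the square of the sum `∑ n, √(p n * q n)` over the two geometric photon-number distributions
`p n = N ^ n / (N + 1) ^ (n + 1)` and `q n = M ^ n / (M + 1) ^ (n + 1)`, in closed form. -/
noncomputable def thermalFidelity (N M : ℝ) : ℝ :=
  (√((N + 1) * (M + 1)) - √(N * M)) ^ (-2 : ℤ)

/-- The sine distance `√(1 - F)` between the thermal states with mean photon numbers `N` and `M`,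
through which `eTherm` depends on the noise variance. -/
noncomputable def thermalSineDistance (N M : ℝ) : ℝ :=
  √(1 - thermalFidelity N M)

/-- The right-hand side is `1 / √F`; staying away from zero, it makes the fidelity `F` continuous
up to the boundary `N = 0` or `M = 0`. -/
theorem one_le_sqrt_mul_sub_sqrt_mul {N M : ℝ} (hN : 0 ≤ N) (hM : 0 ≤ M) :
    1 ≤ √((N + 1) * (M + 1)) - √(N * M) := by
  have am_gm : 2 * √(N * M) ≤ N + M := by
    simpa only [Real.sqrt_mul hN, Real.sq_sqrt hN, Real.sq_sqrt hM, mul_assoc]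
      using two_mul_le_add_sq √N √M
  have sq_le : (1 + √(N * M)) ^ 2 ≤ (N + 1) * (M + 1) := by
    calc (1 + √(N * M)) ^ 2 = 1 + 2 * √(N * M) + √(N * M) ^ 2 := by ring
      _ = 1 + 2 * √(N * M) + N * M := by rw [Real.sq_sqrt (mul_nonneg hN hM)]
      _ ≤ 1 + (N + M) + N * M := by gcongr
      _ = (N + 1) * (M + 1) := by ring
  exact le_sub_iff_add_le.mpr (Real.le_sqrt_of_sq_le sq_le)

theorem thermalFidelity_self {N : ℝ} (hN : 0 ≤ N) : thermalFidelity N N = 1 := by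
  rw [thermalFidelity, Real.sqrt_mul_self (by positivity), Real.sqrt_mul_self hN,
    add_sub_cancel_left, one_zpow]

theorem continuousOn_thermalFidelity :
    ContinuousOn (fun x : ℝ × ℝ => thermalFidelity x.1 x.2) (Set.Ici 0 ×ˢ Set.Ici 0) := by
  unfold thermalFidelity
  refine ContinuousOn.zpow₀ (by fun_prop) _ fun x hx => Or.inl ?_
  exact (zero_lt_one.trans_le (one_le_sqrt_mul_sub_sqrt_mul hx.1 hx.2)).ne'

theorem thermalSineDistance_self {N : ℝ} (hN : 0 ≤ N) : thermalSineDistance N N = 0 := by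
  rw [thermalSineDistance, thermalFidelity_self hN, sub_self, Real.sqrt_zero]

theorem continuousOn_thermalSineDistance :
    ContinuousOn (fun x : ℝ × ℝ => thermalSineDistance x.1 x.2) (Set.Ici 0 ×ˢ Set.Ici 0) :=
  (continuousOn_const.sub continuousOn_thermalFidelity).sqrt

theorem tendsto_thermalSineDistance_self {N : ℝ} (hN : 0 ≤ N) :
    Tendsto (thermalSineDistance N) (𝓝[Set.Ici 0] N) (𝓝 0) := by
  have continuousOn_right : ContinuousOn (thermalSineDistance N) (Set.Ici 0) :=
    continuousOn_thermalSineDistance.comp (f := fun M => (N, M)) (by fun_prop)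
      fun _ hM => ⟨hN, hM⟩
  simpa only [thermalSineDistance_self hN] using (continuousOn_right N hN).tendsto

theorem le_simulatedPhotonNumber {NB η σ : ℝ} (hη₀ : 0 ≤ η) (hη₁ : η < 1) (hσ : 0 ≤ σ) :
    NB ≤ simulatedPhotonNumber NB η σ :=
  le_add_of_nonneg_right (div_nonneg (mul_nonneg hη₀ hσ) (sub_nonneg.mpr hη₁.le))

theorem continuous_simulatedPhotonNumber (NB η : ℝ) :
    Continuous (simulatedPhotonNumber NB η) := by
  unfold simulatedPhotonNumber
  fun_prop

theorem simulatedPhotonNumber_zero (NB η : ℝ) : simulatedPhotonNumber NB η 0 = NB := by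
  rw [simulatedPhotonNumber, mul_zero, zero_div, add_zero]

theorem tendsto_simulatedPhotonNumber (NB : ℝ) {η : ℝ} (hη₀ : 0 ≤ η) (hη₁ : η < 1) :
    Tendsto (simulatedPhotonNumber NB η) (𝓝[≥] 0) (𝓝[≥] NB) := by
  refine tendsto_nhdsWithin_iff.mpr ⟨?_, ?_⟩
  · exact ((continuous_simulatedPhotonNumber NB η).tendsto' 0 NB
      (simulatedPhotonNumber_zero NB η)).mono_left nhdsWithin_le_nhds
  · filter_upwards [self_mem_nhdsWithin] with σ hσ
    exact le_simulatedPhotonNumber hη₀ hη₁ hσ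

theorem eTherm_eq_thermalSineDistance (NB η σ : ℝ) :
    eTherm NB η σ = thermalSineDistance NB (simulatedPhotonNumber NB η σ) :=
  rfl

/-- For every transmissivity `η ∈ (0,1)` and thermal photon number `N_B ≥ 0`,
`e(N_B, η, σ) → 0` as `σ → 0⁺`: the teleportation simulation of the thermal channel
converges uniformly to the thermal channel. -/
theorem thermal_channel_uniform_convergence (η NB : ℝ)
    (hη : η ∈ Set.Ioo (0 : ℝ) 1) (hNB : 0 ≤ NB) :
    Tendsto (fun σ : ℝ => eTherm NB η σ) (𝓝[>] 0) (𝓝 0) := by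
  simp only [eTherm_eq_thermalSineDistance]
  have photonNumber_tendsto :
      Tendsto (simulatedPhotonNumber NB η) (𝓝[>] 0) (𝓝[Set.Ici 0] NB) :=
    (tendsto_simulatedPhotonNumber NB hη.1.le hη.2).mono_left
      (nhdsWithin_mono 0 Set.Ioi_subset_Ici_self) |>.mono_right
      (nhdsWithin_mono NB (Set.Ici_subset_Ici.mpr hNB))
  exact (tendsto_thermalSineDistance_self hNB).comp photonNumber_tendsto
end
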